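/- Let H be a real Hilbert space, let C : H →L H be a continuous linear operator that is coercive, i.e., there is α > 0 with ⟨C v, v⟩ ≥ α‖v‖² for all v ∈ H, and let K : H →L H be a compact operator. Set B = C + K and let B† denote the Hilbert-space adjoint of B. Then B is injective if and only if B† is injective. -/

import Mathlib

open RealInnerProductSpace

lemma aux_adjoint_compact
    {H : Type*} [NormedAddCommGroup H] [InnerProductSpace ℝ H] [CompleteSpace H]
    (K : H →L[ℝ] H) (hK : IsCompactOperator K) :
    IsCompactOperator (ContinuousLinearMap.adjoint K) := by
  set L := ContinuousLinearMap.adjoint K with hL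
  have hA : IsCompactOperator (K ∘L L) := hK.comp_clm L
  have hA1 := (isCompactOperator_iff_isCompact_closure_image_ball
    ((K ∘L L : H →L[ℝ] H) : H →ₗ[ℝ] H) (zero_lt_one)).1 hA
  have hA2 : TotallyBounded ((K ∘L L) '' Metric.ball 0 1) :=
    hA1.totallyBounded.subset subset_closure
  refine (isCompactOperator_iff_isCompact_closure_image_ball
    (L : H →ₗ[ℝ] H) (zero_lt_one)).2 ?_
  refine TotallyBounded.isCompact_of_isClosed (TotallyBounded.closure ?_) isClosed_closure
  rw [Metric.totallyBounded_iff]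
  intro ε hε
  obtain ⟨t, hts, htf, hcov⟩ := Metric.finite_approx_of_totallyBounded hA2 (ε ^ 2 / 2) (by positivity)
  obtain ⟨t', ht's, ht'f, rfl⟩ := Set.exists_subset_image_finite_and.1 ⟨t, hts, htf, rfl⟩
  refine ⟨L '' t', ht'f.image _, ?_⟩
  rintro _ ⟨x, hx, rfl⟩
  have := hcov ⟨x, hx, rfl⟩
  simp only [Set.mem_iUnion, Set.mem_image, exists_prop] at this
  obtain ⟨_, ⟨y, hy, rfl⟩, hd⟩ := this
  simp only [Set.mem_iUnion, exists_prop]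
  refine ⟨L y, ⟨y, hy, rfl⟩, ?_⟩
  have hy1 := ht's hy
  rw [mem_ball_zero_iff] at hx hy1
  rw [Metric.mem_ball, dist_eq_norm, ← map_sub] at hd
  rw [Metric.mem_ball, dist_eq_norm, ContinuousLinearMap.coe_coe, ← map_sub]
  have hn : ‖x - y‖ < 2 := (norm_sub_le x y).trans_lt (by linarith)
  have h1 : ‖L (x - y)‖ ^ 2 ≤ ‖(K ∘L L) (x - y)‖ * ‖x - y‖ := by
    rw [← real_inner_self_eq_norm_sq]
    nth_rewrite 2 [hL]
    rw [ContinuousLinearMap.adjoint_inner_right]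
    exact real_inner_le_norm _ _
  have h2 : ‖(K ∘L L) (x - y)‖ * ‖x - y‖ < ε ^ 2 := by
    nlinarith [norm_nonneg (x - y), norm_nonneg ((K ∘L L) (x - y))]
  exact lt_of_pow_lt_pow_left₀ 2 hε.le (h1.trans_lt h2)

lemma aux_isUnit
    {H : Type*} [NormedAddCommGroup H] [InnerProductSpace ℝ H] [CompleteSpace H]
    (C K : H →L[ℝ] H)
    (α : ℝ) (hα : 0 < α) (hcoer : ∀ v : H, α * ‖v‖ ^ 2 ≤ ⟪C v, v⟫)
    (hK : IsCompactOperator K) (hinj : Function.Injective (C + K)) :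
    Function.Surjective (C + K) := by
  have hco : IsCoercive ((innerSL ℝ : H →L[ℝ] H →L[ℝ] ℝ) ∘L C) :=
    ⟨α, hα, fun u => by
      have := hcoer u
      rw [pow_two, ← mul_assoc] at this
      exact this⟩
  let e := hco.continuousLinearEquivOfBilin
  have he : ∀ v, e v = C v := fun v => by
    refine ext_inner_right ℝ fun w => ?_
    exact hco.continuousLinearEquivOfBilin_apply v w
  let T : H →L[ℝ] H := (e.symm : H →L[ℝ] H) ∘L K
  have hT : IsCompactOperator T := hK.clm_comp (e.symm : H →L[ℝ] H)
  have key : ∀ x, e (x + T x) = (C + K) x := fun x => by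
    rw [map_add, he]; simp [T]
  rcases hT.hasEigenvalue_or_mem_resolventSet (μ := -1) (by norm_num) with h | h
  · obtain ⟨v, hv⟩ := h.exists_hasEigenvector
    have h1 : T v = (-1 : ℝ) • v := hv.apply_eq_smul
    refine absurd (hinj (a₁ := v) (a₂ := 0) ?_) hv.2
    rw [← key, h1]; simp
  · rw [spectrum.mem_resolventSet_iff] at h
    obtain ⟨u, hu⟩ := h
    intro y
    refine ⟨-((↑u⁻¹ : H →L[ℝ] H) (e.symm y)), ?_⟩
    have h2 := congrArg (fun f : H →L[ℝ] H => f (e.symm y)) u.mul_inv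
    rw [hu] at h2
    set z := (↑u⁻¹ : H →L[ℝ] H) (e.symm y)
    have h3 : (-z) + T (-z) = e.symm y := by
      simp [Algebra.algebraMap_eq_smul_one] at h2
      rw [map_neg, ← sub_eq_add_neg]
      exact h2
    rw [← key, h3]; simp

lemma aux_adjoint_inj
    {H : Type*} [NormedAddCommGroup H] [InnerProductSpace ℝ H] [CompleteSpace H]
    (B : H →L[ℝ] H) (hs : Function.Surjective B) :
    Function.Injective (ContinuousLinearMap.adjoint B) := by
  rw [injective_iff_map_eq_zero]
  intro x hx
  obtain ⟨y, rfl⟩ := hs x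
  rw [← inner_self_eq_zero (𝕜 := ℝ), ← ContinuousLinearMap.adjoint_inner_left, hx, inner_zero_left]

/-- **Fredholm alternative (uniqueness for the problem and its adjoint).**
Let `B = C + K` where `C` is a coercive continuous linear operator on a real Hilbert
space `H` and `K` is a compact operator, and let `B†` be the Hilbert-space adjoint of
`B`.  Then `B` is injective if and only if `B†` is injective. -/
theorem fredholm_injective_iff_adjoint_injective
    {H : Type*} [NormedAddCommGroup H] [InnerProductSpace ℝ H] [CompleteSpace H]
    (C K : H →L[ℝ] H)
    (α : ℝ) (hα : 0 < α) (hcoer : ∀ v : H, α * ‖v‖ ^ 2 ≤ ⟪C v, v⟫)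
    (hK : IsCompactOperator K) (B : H →L[ℝ] H) (hB : B = C + K) :
    Function.Injective B ↔ Function.Injective (ContinuousLinearMap.adjoint B) := by
  subst hB
  constructor
  · intro h
    exact aux_adjoint_inj _ (aux_isUnit C K α hα hcoer hK h)
  · intro h
    have h2 : Function.Surjective (ContinuousLinearMap.adjoint (C + K)) := by
      rw [map_add] at h ⊢
      refine aux_isUnit _ _ α hα (fun v => ?_) (aux_adjoint_compact K hK) h
      rw [ContinuousLinearMap.adjoint_inner_left, real_inner_comm]
      exact hcoer v
    simpa using aux_adjoint_inj _ h2
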